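/- Let K, B, d be positive integers with B dividing K, and for k ∈ {1,…,K} let [k] := B·⌊(k−1)/B⌋ + 1. Let H > 0 and λ ≥ 1 be reals, and let φ^(1),…,φ^(K) and ψ^(1),…,ψ^(K) be vectors in ℝ^d satisfying ‖φ^(k)‖₂² ≤ H, ‖ψ^(k)‖_∞ ≤ 2, and |⟨ψ^(k), φ^(k)⟩| ≤ 1 for all k. Then ∑_{k=1}^K |⟨ψ^(k), φ^(k)⟩| ≤ (B·d / (2·log 2))·log(1 + K·H/λ) + 2·√(2·d·log(1 + K·H/λ)) · √( 4·K·λ + ∑_{k=1}^K ∑_{t<[k]} ⟨φ^(t), ψ^(k)⟩² ). -/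

import Mathlib

open scoped BigOperators RealInnerProductSpace

noncomputable section

/-- Batch start of episode `k` under fixed batch size `B`:
`[k] := B * ⌊(k-1)/B⌋ + 1`. -/
def batchStart (B k : ℕ) : ℕ := B * ((k - 1) / B) + 1

/-!
Freeze the design matrix `V = (λ / d) • 1 + ∑ φ t (φ t)ᵀ` over each batch, so that
`‖ψ‖²_V` is the penalty `λ / d * ‖ψ‖²` plus the squared residuals of earlier batches, and
Cauchy-Schwarz gives `⟪ψ, φ⟫² ≤ ‖ψ‖²_V * ‖φ‖²_{V⁻¹}`. Since `1 + tr A ≤ det (1 + A)` for positive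
semidefinite `A`, a batch with `q = ∑ ‖φ‖²_{V⁻¹}` increases `log det V` by at least `log (1 + q)`.
A batch whose increase is at least `log 4` is charged trivially by its size, which costs at most
`B / log 4` per unit of potential; in every other batch `q ≤ 3`, hence `q` is at most four times
the increase and a second Cauchy-Schwarz over the batches applies. By concavity of `log`, the
total increase of the potential is at most `d * log (1 + K * H / λ)`.
-/

open Finset Matrix Real

lemma le_four_mul_log_one_add {a : ℝ} (ha₀ : 0 ≤ a) (ha₃ : a ≤ 3) : a ≤ 4 * log (1 + a) := by
  have hlog := le_log_one_add_of_nonneg ha₀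
  have hfrac : a / 4 ≤ 2 * a / (a + 2) := by
    rw [div_le_div_iff₀ (by positivity) (by positivity)]
    nlinarith
  linarith

lemma one_add_sum_le_prod_one_add {ι R : Type*} [CommSemiring R] [PartialOrder R]
    [IsOrderedRing R] {s : Finset ι} {f : ι → R} (hf : ∀ i ∈ s, 0 ≤ f i) :
    1 + ∑ i ∈ s, f i ≤ ∏ i ∈ s, (1 + f i) := by
  classical
  induction s using Finset.induction_on with
  | empty => simp
  | insert a s ha ih =>
    rw [forall_mem_insert] at hf
    have hsum : 0 ≤ ∑ i ∈ s, f i := sum_nonneg hf.2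
    rw [sum_insert ha, prod_insert ha]
    calc 1 + (f a + ∑ i ∈ s, f i) ≤ 1 + (f a + ∑ i ∈ s, f i) + f a * ∑ i ∈ s, f i :=
          le_add_of_nonneg_right (mul_nonneg hf.1 hsum)
      _ = (1 + f a) * (1 + ∑ i ∈ s, f i) := by ring
      _ ≤ (1 + f a) * ∏ i ∈ s, (1 + f i) :=
          mul_le_mul_of_nonneg_left (ih hf.2) (add_nonneg zero_le_one hf.1)

section DesignMatrix

variable {n ι : Type*}

/-- The design (regularized covariance) matrix of the vectors `x t`, `t ∈ s`, started from the
regularizer `V`. Allowing any regularizer lets the design matrix after one batch serve as the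
regularizer for the next. -/
def designMatrix (V : Matrix n n ℝ) (x : ι → n → ℝ) (s : Finset ι) : Matrix n n ℝ :=
  V + ∑ t ∈ s, vecMulVec (x t) (x t)

lemma designMatrix_union [DecidableEq ι] (V : Matrix n n ℝ) (x : ι → n → ℝ) {s t : Finset ι}
    (hst : Disjoint s t) :
    designMatrix V x (s ∪ t) = designMatrix (designMatrix V x s) x t := by
  simp only [designMatrix, sum_union hst, add_assoc]

lemma posDef_designMatrix [Finite n] {V : Matrix n n ℝ} (hV : V.PosDef) (x : ι → n → ℝ)
    (s : Finset ι) : (designMatrix V x s).PosDef :=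
  hV.add_posSemidef <| posSemidef_sum _ fun t _ => by
    simpa using posSemidef_vecMulVec_self_star (x t)

variable [Fintype n]

lemma dotProduct_designMatrix_mulVec (V : Matrix n n ℝ) (x : ι → n → ℝ) (s : Finset ι)
    (y : n → ℝ) :
    y ⬝ᵥ designMatrix V x s *ᵥ y = y ⬝ᵥ V *ᵥ y + ∑ t ∈ s, (x t ⬝ᵥ y) ^ 2 := by
  simp [designMatrix, add_mulVec, sum_mulVec, dotProduct_sum, vecMulVec_mulVec,
    dotProduct_comm y (x _), sq]

lemma trace_designMatrix (V : Matrix n n ℝ) (x : ι → n → ℝ) (s : Finset ι) :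
    (designMatrix V x s).trace = V.trace + ∑ t ∈ s, x t ⬝ᵥ x t := by
  simp [designMatrix, trace_sum, trace_vecMulVec]

variable [DecidableEq n]

lemma det_one_add_eq_prod_one_add_eigenvalues {A : Matrix n n ℝ} (hA : A.IsHermitian) :
    (1 + A).det = ∏ i, (1 + hA.eigenvalues i) := by
  have hdiag : 1 + A = Unitary.conjStarAlgAut ℝ _ hA.eigenvectorUnitary
      (diagonal fun i => 1 + hA.eigenvalues i) := by
    have hadd : diagonal (fun i => 1 + hA.eigenvalues i) =
        1 + diagonal (RCLike.ofReal ∘ hA.eigenvalues) := by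
      rw [← diagonal_one, diagonal_add]; rfl
    rw [hadd, map_add, map_one, ← hA.spectral_theorem]
  rw [hdiag, Unitary.conjStarAlgAut_apply, det_mul_comm, ← mul_assoc]
  simp

lemma one_add_trace_le_det_one_add {A : Matrix n n ℝ} (hA : A.PosSemidef) :
    1 + A.trace ≤ (1 + A).det := by
  rw [det_one_add_eq_prod_one_add_eigenvalues hA.isHermitian,
    hA.isHermitian.trace_eq_sum_eigenvalues]
  exact one_add_sum_le_prod_one_add fun i _ => hA.eigenvalues_nonneg i

lemma log_det_le_of_trace_le {A : Matrix n n ℝ} (hA : A.PosDef) {c : ℝ} (hc : 0 < c)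
    (htrace : A.trace ≤ Fintype.card n * c) : log A.det ≤ Fintype.card n * log c := by
  have hlog (i : n) :
      log (hA.isHermitian.eigenvalues i) ≤ log c + (hA.isHermitian.eigenvalues i / c - 1) := by
    have h := log_le_sub_one_of_pos (div_pos (hA.eigenvalues_pos i) hc)
    rw [log_div (hA.eigenvalues_pos i).ne' hc.ne'] at h
    linarith
  have htrace' : A.trace / c ≤ Fintype.card n := (div_le_iff₀ hc).2 htrace
  calc log A.det = ∑ i, log (hA.isHermitian.eigenvalues i) := by
        rw [hA.isHermitian.det_eq_prod_eigenvalues]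
        exact log_prod fun i _ => (hA.eigenvalues_pos i).ne'
    _ ≤ ∑ i, (log c + (hA.isHermitian.eigenvalues i / c - 1)) := sum_le_sum fun i _ => hlog i
    _ = Fintype.card n * log c + (A.trace / c - Fintype.card n) := by
        simp [sum_add_distrib, ← sum_div, hA.isHermitian.trace_eq_sum_eigenvalues]
    _ ≤ Fintype.card n * log c := by linarith

lemma dotProduct_sq_le_mul_inv {V : Matrix n n ℝ} (hV : V.PosDef) (y x : n → ℝ) :
    (y ⬝ᵥ x) ^ 2 ≤ (y ⬝ᵥ V *ᵥ y) * (x ⬝ᵥ V⁻¹ *ᵥ x) := by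
  have hcancel : V *ᵥ V⁻¹ *ᵥ x = x := by
    rw [mulVec_mulVec, mul_nonsing_inv _ hV.det_pos.ne'.isUnit, one_mulVec]
  have hnonneg (z : n → ℝ) : 0 ≤ V.toBilin' z z := by
    simpa [toBilin'_apply'] using hV.posSemidef.dotProduct_mulVec_nonneg z
  have hsymm : LinearMap.IsSymm V.toBilin' := LinearMap.BilinForm.isSymm_iff.1 <|
    isSymm_toBilin'_iff_isSymm.2 (by simpa using hV.isHermitian)
  simpa [toBilin'_apply', hcancel, dotProduct_comm (V⁻¹ *ᵥ x)] using
    LinearMap.BilinForm.apply_sq_le_of_symm _ hnonneg hsymm y (V⁻¹ *ᵥ x)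

lemma sum_abs_dotProduct_le_sqrt_mul_sqrt {V : Matrix n n ℝ} (hV : V.PosDef) (s : Finset ι)
    (x y : ι → n → ℝ) :
    ∑ k ∈ s, |y k ⬝ᵥ x k| ≤
      √(∑ k ∈ s, x k ⬝ᵥ V⁻¹ *ᵥ x k) * √(∑ k ∈ s, y k ⬝ᵥ V *ᵥ y k) := by
  have hx (k : ι) : 0 ≤ x k ⬝ᵥ V⁻¹ *ᵥ x k :=
    hV.inv.posSemidef.dotProduct_mulVec_nonneg (x k)
  have hy (k : ι) : 0 ≤ y k ⬝ᵥ V *ᵥ y k := hV.posSemidef.dotProduct_mulVec_nonneg (y k)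
  refine (sum_le_sum fun k _ => ?_).trans (sum_sqrt_mul_sqrt_le s hx hy)
  rw [mul_comm, ← sqrt_mul (hy k)]
  exact abs_le_sqrt (dotProduct_sq_le_mul_inv hV (y k) (x k))

/-- The information gain (increase of the log-determinant potential) from adding the vectors
`x t`, `t ∈ s`, to the design matrix `V`. It omits the conventional factor `1 / 2`. -/
def informationGain (V : Matrix n n ℝ) (x : ι → n → ℝ) (s : Finset ι) : ℝ :=
  log (designMatrix V x s).det - log V.det

lemma det_mul_one_add_sum_le_det_designMatrix {V : Matrix n n ℝ} (hV : V.PosDef)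
    (x : ι → n → ℝ) (s : Finset ι) :
    V.det * (1 + ∑ t ∈ s, x t ⬝ᵥ V⁻¹ *ᵥ x t) ≤ (designMatrix V x s).det := by
  classical
  let X : Matrix n s ℝ := .of fun i t => x t i
  have hdesign : designMatrix V x s = V + X * Xᵀ := by
    ext i j
    simp only [designMatrix, X, Matrix.add_apply, Matrix.sum_apply, mul_apply, vecMulVec_apply,
      transpose_apply, of_apply, sum_coe_sort s fun t => x t i * x t j]
  have htrace : (Xᵀ * V⁻¹ * X).trace = ∑ t ∈ s, x t ⬝ᵥ V⁻¹ *ᵥ x t := by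
    rw [← sum_coe_sort, Matrix.mul_assoc]
    rfl
  have hpsd : (Xᵀ * V⁻¹ * X).PosSemidef := by
    simpa using hV.inv.posSemidef.conjTranspose_mul_mul_same X
  rw [hdesign, det_add_mul _ _ hV.det_pos.ne'.isUnit, ← htrace]
  exact mul_le_mul_of_nonneg_left (one_add_trace_le_det_one_add hpsd) hV.det_pos.le

lemma log_one_add_sum_le_informationGain {V : Matrix n n ℝ} (hV : V.PosDef)
    (x : ι → n → ℝ) (s : Finset ι) :
    log (1 + ∑ t ∈ s, x t ⬝ᵥ V⁻¹ *ᵥ x t) ≤ informationGain V x s := by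
  have hpos : 0 < 1 + ∑ t ∈ s, x t ⬝ᵥ V⁻¹ *ᵥ x t :=
    add_pos_of_pos_of_nonneg one_pos <| sum_nonneg fun t _ =>
      hV.inv.posSemidef.dotProduct_mulVec_nonneg (x t)
  rw [informationGain, le_sub_iff_add_le', ← log_mul hV.det_pos.ne' hpos.ne']
  exact log_le_log (mul_pos hV.det_pos hpos) (det_mul_one_add_sum_le_det_designMatrix hV x s)

lemma informationGain_nonneg {V : Matrix n n ℝ} (hV : V.PosDef) (x : ι → n → ℝ)
    (s : Finset ι) : 0 ≤ informationGain V x s :=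
  (log_nonneg <| le_add_of_nonneg_right <| sum_nonneg fun t _ =>
    hV.inv.posSemidef.dotProduct_mulVec_nonneg (x t)).trans
    (log_one_add_sum_le_informationGain hV x s)

lemma informationGain_union [DecidableEq ι] (V : Matrix n n ℝ) (x : ι → n → ℝ) {s t : Finset ι}
    (hst : Disjoint s t) :
    informationGain V x (s ∪ t) =
      informationGain V x s + informationGain (designMatrix V x s) x t := by
  simp only [informationGain, designMatrix_union V x hst]
  ring

lemma informationGain_smul_one_le {μ M : ℝ} (hμ : 0 < μ) {x : ι → n → ℝ} {s : Finset ι}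
    (hx : ∑ t ∈ s, x t ⬝ᵥ x t ≤ M) :
    informationGain (μ • 1) x s ≤ Fintype.card n * log (1 + M / (Fintype.card n * μ)) := by
  cases isEmpty_or_nonempty n
  · simp [informationGain]
  have hM : 0 ≤ M := (sum_nonneg fun t _ => by
    simpa using dotProduct_star_self_nonneg (x t)).trans hx
  set c : ℝ := 1 + M / (Fintype.card n * μ) with hc
  have hc₀ : 0 < c := by positivity
  have htrace : (designMatrix (μ • 1) x s).trace ≤ Fintype.card n * (μ * c) :=
    calc (designMatrix (μ • 1) x s).trace = Fintype.card n * μ + ∑ t ∈ s, x t ⬝ᵥ x t := by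
          rw [trace_designMatrix, trace_smul, trace_one, smul_eq_mul, mul_comm]
      _ ≤ Fintype.card n * μ + M := by gcongr
      _ = Fintype.card n * (μ * c) := by rw [hc]; field_simp
  have hlog := log_det_le_of_trace_le (posDef_designMatrix (PosDef.one.smul hμ) x s)
    (mul_pos hμ hc₀) htrace
  rw [log_mul hμ.ne' hc₀.ne'] at hlog
  rw [informationGain, det_smul, det_one, mul_one, log_pow]
  linarith

lemma sum_abs_dotProduct_le_informationGain {V : Matrix n n ℝ} (hV : V.PosDef) {s : Finset ι}
    {x y : ι → n → ℝ} (hxy : ∀ k ∈ s, |y k ⬝ᵥ x k| ≤ 1) :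
    ∑ k ∈ s, |y k ⬝ᵥ x k| ≤ #s / log 4 * informationGain V x s +
      2 * √(informationGain V x s) * √(∑ k ∈ s, y k ⬝ᵥ V *ᵥ y k) := by
  have hlog4 : 0 < log 4 := log_pos (by norm_num)
  have hgain := informationGain_nonneg hV x s
  rcases le_total (log 4) (informationGain V x s) with hlarge | hsmall
  · calc ∑ k ∈ s, |y k ⬝ᵥ x k| ≤ #s * 1 := by
          simpa using sum_le_card_nsmul s _ 1 hxy
      _ ≤ #s * (informationGain V x s / log 4) := by gcongr; rwa [one_le_div hlog4]
      _ = #s / log 4 * informationGain V x s := by ring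
      _ ≤ _ := le_add_of_nonneg_right (by positivity)
  · set q := ∑ k ∈ s, x k ⬝ᵥ V⁻¹ *ᵥ x k
    have hq₀ : 0 ≤ q := sum_nonneg fun k _ => hV.inv.posSemidef.dotProduct_mulVec_nonneg (x k)
    have hqgain : log (1 + q) ≤ informationGain V x s := log_one_add_sum_le_informationGain hV x s
    have hq₃ : q ≤ 3 := by
      have := (log_le_log_iff (by positivity) (by norm_num)).1 (hqgain.trans hsmall)
      linarith
    have hqle : q ≤ 2 ^ 2 * informationGain V x s := by
      linarith [le_four_mul_log_one_add hq₀ hq₃]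
    calc ∑ k ∈ s, |y k ⬝ᵥ x k| ≤ √q * √(∑ k ∈ s, y k ⬝ᵥ V *ᵥ y k) :=
          sum_abs_dotProduct_le_sqrt_mul_sqrt hV s x y
      _ ≤ √(2 ^ 2 * informationGain V x s) * √(∑ k ∈ s, y k ⬝ᵥ V *ᵥ y k) := by gcongr
      _ = 2 * √(informationGain V x s) * √(∑ k ∈ s, y k ⬝ᵥ V *ᵥ y k) := by
          rw [sqrt_mul (by norm_num), sqrt_sq (by norm_num)]
      _ ≤ _ := le_add_of_nonneg_left (by positivity)

lemma sum_informationGain_filter_eq (V : Matrix n n ℝ) (x : ι → n → ℝ) (s : Finset ι) (β : ι → ℕ)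
    (N : ℕ) :
    ∑ b ∈ range N, informationGain (designMatrix V x {t ∈ s | β t < b}) x {t ∈ s | β t = b} =
      informationGain V x {t ∈ s | β t < N} := by
  classical
  induction N with
  | zero => simp [informationGain, designMatrix]
  | succ N ih =>
    have hsplit : ({t ∈ s | β t < N + 1} : Finset ι) =
        {t ∈ s | β t < N} ∪ {t ∈ s | β t = N} := by
      simp only [Nat.lt_succ_iff_lt_or_eq, filter_or]
    have hdisj : Disjoint ({t ∈ s | β t < N} : Finset ι) {t ∈ s | β t = N} :=
      disjoint_filter.2 fun _ _ hlt => hlt.ne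
    rw [sum_range_succ, ih, hsplit, informationGain_union V x hdisj]

theorem sum_abs_dotProduct_le_of_batches {V : Matrix n n ℝ} (hV : V.PosDef) {s : Finset ι}
    {x y : ι → n → ℝ} (hxy : ∀ k ∈ s, |y k ⬝ᵥ x k| ≤ 1) {β : ι → ℕ} {B : ℕ}
    (hB : ∀ b, #{t ∈ s | β t = b} ≤ B) :
    ∑ k ∈ s, |y k ⬝ᵥ x k| ≤ B / log 4 * informationGain V x s +
      2 * √(informationGain V x s) *
        √(∑ k ∈ s, y k ⬝ᵥ designMatrix V x {t ∈ s | β t < β k} *ᵥ y k) := by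
  obtain ⟨N, hN⟩ : ∃ N, ∀ k ∈ s, β k < N :=
    ⟨s.sup β + 1, fun k hk => Nat.lt_succ_of_le (le_sup hk)⟩
  have hfiber (f : ι → ℝ) : ∑ b ∈ range N, ∑ k ∈ s with β k = b, f k = ∑ k ∈ s, f k :=
    sum_fiberwise_of_maps_to (fun k hk => mem_range.2 (hN k hk)) f
  have hVb (b : ℕ) := posDef_designMatrix hV x {t ∈ s | β t < b}
  set G : ℕ → ℝ := fun b =>
    informationGain (designMatrix V x {t ∈ s | β t < b}) x {t ∈ s | β t = b} with hG
  set P : ℕ → ℝ := fun b =>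
    ∑ k ∈ s with β k = b, y k ⬝ᵥ designMatrix V x {t ∈ s | β t < b} *ᵥ y k
  have hG₀ (b : ℕ) : 0 ≤ G b := informationGain_nonneg (hVb b) x _
  have hP₀ (b : ℕ) : 0 ≤ P b :=
    sum_nonneg fun k _ => (hVb b).posSemidef.dotProduct_mulVec_nonneg (y k)
  have hGsum : ∑ b ∈ range N, G b = informationGain V x s := by
    rw [hG, sum_informationGain_filter_eq, filter_true_of_mem hN]
  have hPsum : ∑ b ∈ range N, P b =
      ∑ k ∈ s, y k ⬝ᵥ designMatrix V x {t ∈ s | β t < β k} *ᵥ y k := by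
    rw [← hfiber]
    exact sum_congr rfl fun b _ => sum_congr rfl fun k hk => by rw [(mem_filter.1 hk).2]
  have hbatch (b : ℕ) :
      ∑ k ∈ s with β k = b, |y k ⬝ᵥ x k| ≤ B / log 4 * G b + 2 * (√(G b) * √(P b)) := by
    refine (sum_abs_dotProduct_le_informationGain (hVb b) fun k hk =>
      hxy k (mem_filter.1 hk).1).trans ?_
    rw [mul_assoc]
    gcongr
    exacts [hG₀ b, hB b]
  calc ∑ k ∈ s, |y k ⬝ᵥ x k| = ∑ b ∈ range N, ∑ k ∈ s with β k = b, |y k ⬝ᵥ x k| :=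
        (hfiber _).symm
    _ ≤ ∑ b ∈ range N, (B / log 4 * G b + 2 * (√(G b) * √(P b))) :=
        sum_le_sum fun b _ => hbatch b
    _ = B / log 4 * ∑ b ∈ range N, G b + 2 * ∑ b ∈ range N, √(G b) * √(P b) := by
        rw [sum_add_distrib, mul_sum, mul_sum]
    _ ≤ B / log 4 * ∑ b ∈ range N, G b + 2 * (√(∑ b ∈ range N, G b) * √(∑ b ∈ range N, P b)) := by
        gcongr
        exact sum_sqrt_mul_sqrt_le _ hG₀ hP₀
    _ = _ := by rw [hGsum, hPsum, mul_assoc]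

end DesignMatrix

lemma norm_sq_le_card_mul_sq_of_forall_abs_le {ι : Type*} [Fintype ι] {v : EuclideanSpace ℝ ι}
    {c : ℝ} (hv : ∀ i, |v i| ≤ c) : ‖v‖ ^ 2 ≤ Fintype.card ι * c ^ 2 :=
  calc ‖v‖ ^ 2 = ∑ i, |v i| ^ 2 := by simp [EuclideanSpace.real_norm_sq_eq]
    _ ≤ ∑ _ : ι, c ^ 2 := by gcongr; exact hv _
    _ = Fintype.card ι * c ^ 2 := by rw [sum_const, card_univ, nsmul_eq_mul]

lemma card_filter_pred_div_eq_le {B : ℕ} (hB : 0 < B) (K b : ℕ) :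
    #{t ∈ Icc 1 K | (t - 1) / B = b} ≤ B := by
  have hsub : ({t ∈ Icc 1 K | (t - 1) / B = b} : Finset ℕ) ⊆ Ioc (B * b) (B * b + B) := by
    intro t ht
    rw [mem_filter, mem_Icc, Nat.div_eq_iff hB] at ht
    rw [mem_Ioc, mul_comm]
    omega
  simpa using card_le_card hsub

lemma filter_pred_div_lt_eq_Ico_batchStart {B K k : ℕ} (hB : 0 < B) (hk : k ≤ K) :
    ({t ∈ Icc 1 K | (t - 1) / B < (k - 1) / B} : Finset ℕ) = Ico 1 (batchStart B k) := by
  ext t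
  have hstart : B * ((k - 1) / B) ≤ k - 1 := Nat.mul_div_le (k - 1) B
  rw [mem_filter, mem_Icc, mem_Ico, batchStart, Nat.div_lt_iff_lt_mul hB, mul_comm]
  omega

theorem sum_abs_inner_le_of_batches {ι E : Type*} [NormedAddCommGroup E] [InnerProductSpace ℝ E]
    [FiniteDimensional ℝ E] {μ M : ℝ} (hμ : 0 < μ) {s : Finset ι} {φ ψ : ι → E}
    (hφ : ∑ t ∈ s, ‖φ t‖ ^ 2 ≤ M) (hpair : ∀ k ∈ s, |⟪ψ k, φ k⟫| ≤ 1) {β : ι → ℕ} {B : ℕ}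
    (hB : ∀ b, #{t ∈ s | β t = b} ≤ B) :
    ∑ k ∈ s, |⟪ψ k, φ k⟫| ≤
      B / log 4 * (Module.finrank ℝ E * log (1 + M / (Module.finrank ℝ E * μ))) +
        2 * √(Module.finrank ℝ E * log (1 + M / (Module.finrank ℝ E * μ))) *
          √(∑ k ∈ s, (μ * ‖ψ k‖ ^ 2 + ∑ t ∈ s with β t < β k, ⟪φ t, ψ k⟫ ^ 2)) := by
  let e := stdOrthonormalBasis ℝ E
  have hinner (u v : E) : ⟪u, v⟫ = (e.repr u).ofLp ⬝ᵥ (e.repr v).ofLp := by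
    rw [← e.repr.inner_map_map, EuclideanSpace.inner_eq_star_dotProduct, star_trivial,
      dotProduct_comm]
  have hgain : informationGain (μ • 1) (fun t => (e.repr (φ t)).ofLp) s ≤
      Module.finrank ℝ E * log (1 + M / (Module.finrank ℝ E * μ)) := by
    simpa using informationGain_smul_one_le hμ (x := fun t => (e.repr (φ t)).ofLp) (s := s)
      (M := M) (by simpa [← hinner] using hφ)
  have hquad (k : ι) : μ * ‖ψ k‖ ^ 2 + ∑ t ∈ s with β t < β k, ⟪φ t, ψ k⟫ ^ 2 =
      (e.repr (ψ k)).ofLp ⬝ᵥ designMatrix (μ • 1) (fun t => (e.repr (φ t)).ofLp)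
        {t ∈ s | β t < β k} *ᵥ (e.repr (ψ k)).ofLp := by
    simp [dotProduct_designMatrix_mulVec, smul_mulVec, ← hinner]
  simp only [hinner] at hpair
  simp only [hquad]
  simp only [hinner]
  refine (sum_abs_dotProduct_le_of_batches (PosDef.one.smul hμ) hpair hB).trans ?_
  gcongr

theorem batched_vector_inequality_general {E : Type*} [NormedAddCommGroup E]
    [InnerProductSpace ℝ E] [FiniteDimensional ℝ E] {K B : ℕ} (hB : 0 < B) {H lam : ℝ}
    (hlam : 0 < lam) {φ ψ : ℕ → E} (hφ : ∀ k ∈ Icc 1 K, ‖φ k‖ ^ 2 ≤ H)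
    (hψ : ∀ k ∈ Icc 1 K, ‖ψ k‖ ^ 2 ≤ 4 * Module.finrank ℝ E)
    (hpair : ∀ k ∈ Icc 1 K, |⟪ψ k, φ k⟫| ≤ 1) :
    ∑ k ∈ Icc 1 K, |⟪ψ k, φ k⟫| ≤
      (B * Module.finrank ℝ E / (2 * log 2)) * log (1 + K * H / lam) +
        2 * √(2 * Module.finrank ℝ E * log (1 + K * H / lam)) *
          √(4 * K * lam + ∑ k ∈ Icc 1 K, ∑ t ∈ Ico 1 (batchStart B k), ⟪φ t, ψ k⟫ ^ 2) := by
  rcases subsingleton_or_nontrivial E with _ | _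
  · simp [Subsingleton.elim (ψ _) 0, Module.finrank_zero_of_subsingleton]
  obtain ⟨d, hd⟩ : ∃ d : ℝ, d = Module.finrank ℝ E := ⟨_, rfl⟩
  have hd₀ : 0 < d := hd ▸ mod_cast Module.finrank_pos
  have hφsum : ∑ k ∈ Icc 1 K, ‖φ k‖ ^ 2 ≤ K * H := by simpa using sum_le_card_nsmul _ _ H hφ
  have hKH : 0 ≤ K * H := (sum_nonneg fun _ _ => sq_nonneg _).trans hφsum
  have hL : 0 ≤ log (1 + K * H / lam) := log_nonneg (le_add_of_nonneg_right (by positivity))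
  have hlog4 : log 4 = 2 * log 2 := by rw [← log_rpow two_pos]; norm_num
  have hbound := sum_abs_inner_le_of_batches (div_pos hlam hd₀) hφsum hpair
    (card_filter_pred_div_eq_le hB K)
  rw [← hd, mul_div_cancel₀ _ hd₀.ne', hlog4] at hbound
  rw [← hd] at hψ ⊢
  have hpenalty (k : ℕ) (hk : k ∈ Icc 1 K) : lam / d * ‖ψ k‖ ^ 2 ≤ 4 * lam :=
    calc lam / d * ‖ψ k‖ ^ 2 ≤ lam / d * (4 * d) := by gcongr; exact hψ k hk
      _ = 4 * lam := by field_simp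
  have hresiduals :
      ∑ k ∈ Icc 1 K, (lam / d * ‖ψ k‖ ^ 2 +
          ∑ t ∈ Icc 1 K with (t - 1) / B < (k - 1) / B, ⟪φ t, ψ k⟫ ^ 2) ≤
        4 * K * lam + ∑ k ∈ Icc 1 K, ∑ t ∈ Ico 1 (batchStart B k), ⟪φ t, ψ k⟫ ^ 2 := by
    rw [sum_add_distrib]
    refine add_le_add ((sum_le_card_nsmul _ _ _ hpenalty).trans_eq ?_)
      (sum_congr rfl fun k hk => ?_).le
    · rw [Nat.card_Icc, Nat.add_sub_cancel, nsmul_eq_mul]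
      ring
    · rw [filter_pred_div_lt_eq_Ico_batchStart hB (mem_Icc.1 hk).2]
  have hdL : d * log (1 + K * H / lam) ≤ 2 * d * log (1 + K * H / lam) := by
    linarith [mul_nonneg hd₀.le hL]
  refine hbound.trans (add_le_add (le_of_eq (by ring)) ?_)
  gcongr

/-- Core vector inequality from the proof of Lemma D.1 of the paper. -/
theorem batched_vector_inequality
    (K B d : ℕ) (hK : 0 < K) (hB : 0 < B) (hd : 0 < d) (hBK : B ∣ K)
    (H lam : ℝ) (hH : 0 < H) (hlam : 1 ≤ lam)
    (φ ψ : ℕ → EuclideanSpace ℝ (Fin d))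
    (hφ : ∀ k ∈ Finset.Icc 1 K, ‖φ k‖ ^ 2 ≤ H)
    (hψ : ∀ k ∈ Finset.Icc 1 K, ∀ i, |ψ k i| ≤ 2)
    (hpair : ∀ k ∈ Finset.Icc 1 K, |⟪ψ k, φ k⟫| ≤ 1) :
    ∑ k ∈ Finset.Icc 1 K, |⟪ψ k, φ k⟫| ≤
      (B * d / (2 * Real.log 2)) * Real.log (1 + K * H / lam) +
        2 * Real.sqrt (2 * d * Real.log (1 + K * H / lam)) *
          Real.sqrt (4 * K * lam +
            ∑ k ∈ Finset.Icc 1 K, ∑ t ∈ Finset.Ico 1 (batchStart B k),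
              ⟪φ t, ψ k⟫ ^ 2) := by
  have hψ' (k : ℕ) (hk : k ∈ Icc 1 K) : ‖ψ k‖ ^ 2 ≤ 4 * d :=
    (norm_sq_le_card_mul_sq_of_forall_abs_le (hψ k hk)).trans_eq (by rw [Fintype.card_fin]; ring)
  simpa using batched_vector_inequality_general hB (one_pos.trans_le hlam) hφ
    (by simpa using hψ') hpair
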